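/- Let G be a set of lines as in the context, let t_0, t_∞ ∈ ℝ with t_0 ≠ t_∞, let s ∈ ℝ, and let ν_0 ∈ ℝ^{d−1}. Define G' = {(ξ,x) ∈ G_X : there exists (ξ',x') ∈ G_X with x + t_0 ξ = x' + t_0 ξ' and s(x + t_∞ ξ) + (x' + t_∞ ξ') − (x' + t_0 ξ') = ν_0}. Then the Lebesgue outer measure of G' satisfies ℒ^{2(d−1)}(G') ≤ |t_0 − t_∞|^{−(d−1)} · ℒ^{d−1}(π_{t_∞}(G)) · m(G). -/

import Mathlib

open MeasureTheory ENNReal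

noncomputable section

/-- `ℝ^{d-1}`, identified with the hyperplane `H` in `ℝ^d`. -/
abbrev Euc (n : ℕ) := EuclideanSpace ℝ (Fin n)

/-- The slice `π_t(G) = {x + tξ : (ξ,x) ∈ G_X}` of a set of lines `G`. -/
def lineSlice {n : ℕ} (G : Set (Euc n × Euc n)) (t : ℝ) : Set (Euc n) :=
  {y | ∃ w ∈ G, y = w.2 + t • w.1}

/-- `m(G) = sup_ξ ℒ^{d-1}({x : (ξ,x) ∈ G_X})`. -/
def mG {n : ℕ} (G : Set (Euc n × Euc n)) : ℝ≥0∞ :=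
  ⨆ ξ : Euc n, volume {x : Euc n | (ξ, x) ∈ G}

/-!
Put `y = x + t∞ ξ` and `z = x + t₀ ξ`. The map `(ξ, x) ↦ (y, z)` has Jacobian `|t₀ - t∞|^(d-1)`,
so it suffices to bound the measure of the corresponding set of pairs `(y, z)`. For these, `y` lies
in the slice at `t∞`. The equation `s y + (t∞ - t₀) ξ' = ν₀` makes the direction `ξ'` of the second
line a function of `y` alone, and that line passes through `z` at height `t₀`. Hence, for fixed `y`,
the point `z` ranges over a translate of the fiber of `G` over `ξ'`, of measure at most `m(G)`.
-/

section Product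

variable {α β γ : Type*} [MeasurableSpace α] [MeasurableSpace β] [MeasurableSpace γ]

lemma measurePreserving_prod_shear [AddGroup β] [MeasurableAdd₂ β]
    (μ : Measure α) [SFinite μ] (ν : Measure β) [SFinite ν] [ν.IsAddRightInvariant]
    {f : α → β} (hf : Measurable f) :
    MeasurePreserving (fun q : α × β ↦ (q.1, q.2 + f q.1)) (μ.prod ν) (μ.prod ν) :=
  (MeasurePreserving.id μ).skew_product (g := fun a b ↦ b + f a)
    (measurable_snd.add (hf.comp measurable_fst))
    (.of_forall fun a ↦ map_add_right_eq_self ν (f a))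

lemma measure_prod_setOf_mem_fiber_le (μ : Measure α) [SFinite μ] (ν : Measure β) [SFinite ν]
    {G : Set (γ × β)} (hG : MeasurableSet G) {p : α → γ} (hp : Measurable p) (T : Set α) :
    μ.prod ν {q | q.1 ∈ T ∧ (p q.1, q.2) ∈ G} ≤ μ T * ⨆ ξ, ν {x | (ξ, x) ∈ G} := by
  have hpG : MeasurableSet {q : α × β | (p q.1, q.2) ∈ G} :=
    ((hp.comp measurable_fst).prodMk measurable_snd) hG
  calc μ.prod ν {q | q.1 ∈ T ∧ (p q.1, q.2) ∈ G}
      = (μ.restrict T).prod ν {q | (p q.1, q.2) ∈ G} := by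
        rw [← ν.restrict_univ, Measure.prod_restrict, Measure.restrict_apply hpG, ν.restrict_univ]
        congr 1
        ext q
        simp [and_comm]
    _ = ∫⁻ y in T, ν {x | (p y, x) ∈ G} ∂μ := Measure.prod_apply hpG
    _ ≤ ∫⁻ _ in T, ⨆ ξ, ν {x | (ξ, x) ∈ G} ∂μ :=
        lintegral_mono fun y ↦ le_iSup (fun ξ ↦ ν {x | (ξ, x) ∈ G}) (p y)
    _ = μ T * ⨆ ξ, ν {x | (ξ, x) ∈ G} := by rw [setLIntegral_const, mul_comm]

end Product

section LinePoint

variable {E : Type*} [AddCommGroup E] [Module ℝ E]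

/-- The point at height `t` of the line with direction `w.1` and base point `w.2`, so that the slice
`π_t(G)` is the image of `G` under `linePoint t`. -/
def linePoint (t : ℝ) (w : E × E) : E := w.2 + t • w.1

lemma linePoint_sub_linePoint (t t' : ℝ) (w : E × E) :
    linePoint t w - linePoint t' w = (t - t') • w.1 := by
  unfold linePoint
  module

@[fun_prop]
lemma measurable_linePoint [MeasurableSpace E] [MeasurableAdd₂ E] [MeasurableConstSMul ℝ E]
    (t : ℝ) : Measurable (linePoint t : E × E → E) := by
  unfold linePoint
  fun_prop

lemma image_linePoint_eq_lineSlice {n : ℕ} (G : Set (Euc n × Euc n)) (t : ℝ) :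
    linePoint t '' G = lineSlice G t := by
  ext y
  simp only [linePoint, lineSlice, Set.mem_image, Set.mem_ofPred_eq, eq_comm]

end LinePoint

section Haar

variable {E : Type*} [NormedAddCommGroup E] [NormedSpace ℝ E] [FiniteDimensional ℝ E]
  [MeasurableSpace E] [BorelSpace E] (μ : Measure E) [μ.IsAddHaarMeasure]

lemma map_linePoint_prodMk_linePoint {t t' : ℝ} (h : t ≠ t') :
    (μ.prod μ).map (fun w ↦ (linePoint t' w, linePoint t w)) =
      ENNReal.ofReal (|t - t'| ^ Module.finrank ℝ E)⁻¹ • μ.prod μ := by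
  have h_shear := measurePreserving_prod_shear μ μ (f := fun ξ : E ↦ t' • ξ) (by fun_prop)
  have h_translate := measurePreserving_prod_shear μ μ (f := id) measurable_id
  have h_scale : (μ.prod μ).map (Prod.map id ((t - t') • ·)) =
      ENNReal.ofReal (|t - t'| ^ Module.finrank ℝ E)⁻¹ • μ.prod μ := by
    rw [← Measure.map_prod_map μ μ measurable_id (by fun_prop), Measure.map_id,
      Measure.map_addHaar_smul μ (sub_ne_zero.mpr h), Measure.prod_smul_right, abs_inv, abs_pow]
  -- `(ξ, x) ↦ (ξ, y) ↦ (y, ξ) ↦ (y, (t - t') ξ) ↦ (y, y + (t - t') ξ)`, where `y = x + t' ξ`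
  have h_factor : (fun w : E × E ↦ (linePoint t' w, linePoint t w)) =
      (fun q ↦ (q.1, q.2 + id q.1)) ∘ Prod.map id ((t - t') • ·) ∘ Prod.swap ∘
        fun w ↦ (w.1, w.2 + t' • w.1) := by
    ext w
    · rfl
    · simp only [linePoint, Function.comp_apply, Prod.map_apply, Prod.swap_prod_mk, id]
      module
  rw [h_factor, ← Measure.map_map h_translate.measurable (by fun_prop),
    ← Measure.map_map (by fun_prop) (by fun_prop),
    (Measure.measurePreserving_swap.comp h_shear).map_eq, h_scale, Measure.map_smul,
    h_translate.map_eq]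

lemma measure_setOf_exists_linePoint_eq_le {G : Set (E × E)} (hG : MeasurableSet G)
    {t₀ tinf : ℝ} (ht : t₀ ≠ tinf) {p : E → E} (hp : Measurable p) :
    μ.prod μ {w | w ∈ G ∧ ∃ w' ∈ G, linePoint t₀ w = linePoint t₀ w' ∧ w'.1 = p (linePoint tinf w)}
      ≤ ENNReal.ofReal (|t₀ - tinf| ^ Module.finrank ℝ E)⁻¹ *
          μ (linePoint tinf '' G) * ⨆ ξ, μ {x | (ξ, x) ∈ G} := by
  let Φ : E × E → E × E := fun w ↦ (linePoint tinf w, linePoint t₀ w + -t₀ • p (linePoint tinf w))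
  let S : Set (E × E) := {q | q.1 ∈ linePoint tinf '' G ∧ (p q.1, q.2) ∈ G}
  have hΦ : (μ.prod μ).map Φ =
      ENNReal.ofReal (|t₀ - tinf| ^ Module.finrank ℝ E)⁻¹ • μ.prod μ := by
    have h_shear := measurePreserving_prod_shear μ μ (f := fun y ↦ -t₀ • p y) (by fun_prop)
    change (μ.prod μ).map ((fun q ↦ (q.1, q.2 + -t₀ • p q.1)) ∘
      fun w ↦ (linePoint tinf w, linePoint t₀ w)) = _
    rw [← Measure.map_map h_shear.measurable (by fun_prop), map_linePoint_prodMk_linePoint μ ht,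
      Measure.map_smul, h_shear.map_eq]
  have h_subset : {w | w ∈ G ∧ ∃ w' ∈ G,
      linePoint t₀ w = linePoint t₀ w' ∧ w'.1 = p (linePoint tinf w)} ⊆ Φ ⁻¹' S := by
    rintro w ⟨hw, w', hw', h_meet, h_dir⟩
    refine ⟨Set.mem_image_of_mem _ hw, ?_⟩
    have h_base : linePoint t₀ w + -t₀ • w'.1 = w'.2 := by
      rw [h_meet]
      simp [linePoint]
    simpa only [Φ, ← h_dir, h_base] using hw'
  calc μ.prod μ {w | w ∈ G ∧ ∃ w' ∈ G,
        linePoint t₀ w = linePoint t₀ w' ∧ w'.1 = p (linePoint tinf w)}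
      ≤ μ.prod μ (Φ ⁻¹' S) := measure_mono h_subset
    _ ≤ (μ.prod μ).map Φ S := Measure.le_map_apply (by fun_prop) S
    _ = ENNReal.ofReal (|t₀ - tinf| ^ Module.finrank ℝ E)⁻¹ * μ.prod μ S := by
        rw [hΦ, Measure.smul_apply, smul_eq_mul]
    _ ≤ ENNReal.ofReal (|t₀ - tinf| ^ Module.finrank ℝ E)⁻¹ *
          μ (linePoint tinf '' G) * ⨆ ξ, μ {x | (ξ, x) ∈ G} := by
        rw [mul_assoc]
        gcongr
        exact measure_prod_setOf_mem_fiber_le μ μ hG hp _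

theorem statement14_general {G : Set (E × E)} (hG : MeasurableSet G)
    {t₀ tinf : ℝ} (ht : t₀ ≠ tinf) (s : ℝ) (ν₀ : E) :
    μ.prod μ {w | w ∈ G ∧ ∃ w' ∈ G, linePoint t₀ w = linePoint t₀ w' ∧
        s • linePoint tinf w + linePoint tinf w' - linePoint t₀ w' = ν₀}
      ≤ ENNReal.ofReal (|t₀ - tinf| ^ Module.finrank ℝ E)⁻¹ *
          μ (linePoint tinf '' G) * ⨆ ξ, μ {x | (ξ, x) ∈ G} := by
  refine (measure_mono ?_).trans (measure_setOf_exists_linePoint_eq_le μ hG ht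
    (p := fun y ↦ (tinf - t₀)⁻¹ • (ν₀ - s • y)) (by fun_prop))
  rintro w ⟨hw, w', hw', h_meet, h_eq⟩
  refine ⟨hw, w', hw', h_meet, ?_⟩
  rw [eq_inv_smul_iff₀ (sub_ne_zero.mpr ht.symm), ← linePoint_sub_linePoint, ← h_eq]
  abel

end Haar

/-- The upper bound `|G_{ν₀}| ≤ |t₀ - t∞|^{-(d-1)} ℒ^{d-1}(π_{t∞}(G)) m(G)` for the
fiber of the map `ν` over `ν₀`. -/
theorem statement14 (d : ℕ) (hd : 2 ≤ d) (G : Set (Euc (d - 1) × Euc (d - 1)))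
    (hG : MeasurableSet G) (hGfin : volume G ≠ ⊤) (hmfin : mG G ≠ ⊤)
    (t₀ tinf : ℝ) (ht : t₀ ≠ tinf) (hslice : volume (lineSlice G tinf) ≠ ⊤)
    (s : ℝ) (ν₀ : Euc (d - 1)) :
    volume {w : Euc (d - 1) × Euc (d - 1) | w ∈ G ∧
        ∃ w' ∈ G, w.2 + t₀ • w.1 = w'.2 + t₀ • w'.1 ∧
          s • (w.2 + tinf • w.1) + (w'.2 + tinf • w'.1) - (w'.2 + t₀ • w'.1) = ν₀}
      ≤ ENNReal.ofReal (|t₀ - tinf| ^ (-(((d:ℝ) - 1)))) *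
          volume (lineSlice G tinf) * mG G := by
  rw [Real.rpow_neg (abs_nonneg _), ← Nat.cast_pred (by lia), Real.rpow_natCast]
  have h := statement14_general volume hG ht s ν₀
  rwa [image_linePoint_eq_lineSlice, finrank_euclideanSpace_fin] at h

end
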